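/- Let k ≥ 2 be an integer, and let α ∈ [0, 1/(k-1)) and β ∈ [0,1] be rational numbers satisfying β + (k-1)·α = 1. Then there exists a sequence (G_n)_{n ∈ ℕ} of finite simple graphs, each regular of positive degree and each admitting a FAT k-coloring with parameters α and β, such that the clique numbers ω(G_n) are pairwise distinct (ω(G_m) ≠ ω(G_n) whenever m ≠ n). -/

import Mathlib

/-- A FAT `k`-coloring of a simple graph `G` with parameters `α, β`:
a surjective vertex coloring `c : V → Fin k` such that for every vertex `v` and every
color `i`, the number of neighbors of `v` colored `i` equals `α·deg(v)` if `c v ≠ i`,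
and `β·deg(v)` if `c v = i`. -/
def IsFATColoring {V : Type*} (G : SimpleGraph V) (k : ℕ) (α β : ℝ) (c : V → Fin k) : Prop :=
  Function.Surjective c ∧
  ∀ (v : V) (i : Fin k),
    (Nat.card {u : V | G.Adj v u ∧ c u = i} : ℝ) =
      if c v = i then β * (G.neighborSet v).ncard else α * (G.neighborSet v).ncard

lemma card_ne_fin (n : ℕ) (x : Fin (n+1)) : Nat.card {s : Fin (n+1) | s ≠ x} = n := by
  have : {s : Fin (n+1) | s ≠ x} = ((Finset.univ.erase x : Finset (Fin (n+1))) : Set _) := by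
    ext s
    simp
  rw [this, Nat.card_coe_set_eq, Set.ncard_coe_finset]
  simp

def fatG (k p q : ℕ) : SimpleGraph (Fin k × Fin (p+1) × Fin (q+1)) where
  Adj u v := (u.1 = v.1 ∧ u.2.1 = v.2.1 ∧ u.2.2 ≠ v.2.2) ∨
    (u.1 ≠ v.1 ∧ u.2.1 ≠ v.2.1 ∧ u.2.2 = v.2.2)
  symm := ⟨by
    rintro u v (⟨h1, h2, h3⟩ | ⟨h1, h2, h3⟩)
    · exact Or.inl ⟨h1.symm, h2.symm, h3.symm⟩
    · exact Or.inr ⟨h1.symm, h2.symm, h3.symm⟩⟩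
  loopless := ⟨by
    rintro u (⟨h1, h2, h3⟩ | ⟨h1, h2, h3⟩)
    · exact h3 rfl
    · exact h1 rfl⟩

lemma fatG_card (k p q : ℕ) (v : Fin k × Fin (p+1) × Fin (q+1)) (i : Fin k) :
    Nat.card {u | (fatG k p q).Adj v u ∧ u.1 = i} = if v.1 = i then q else p := by
  split_ifs with hi
  · have : {u | (fatG k p q).Adj v u ∧ u.1 = i} =
        (fun s : Fin (q+1) => (i, v.2.1, s)) '' {s | s ≠ v.2.2} := by
      ext ⟨a, t, s⟩
      simp only [fatG, Set.mem_ofPred_eq, Set.mem_image, Prod.mk.injEq]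
      constructor
      · rintro ⟨⟨h1, h2, h3⟩ | ⟨h1, h2, h3⟩, h4⟩
        · exact ⟨s, h3.symm, h4.symm, h2, rfl⟩
        · exact absurd (hi.trans h4.symm) h1
      · rintro ⟨s', h1, h2, h3, rfl⟩
        exact ⟨Or.inl ⟨hi.trans h2, h3, h1.symm⟩, h2.symm⟩
    rw [this, Nat.card_image_of_injective]
    · exact card_ne_fin _ _
    · intro x y hxy
      simpa using hxy
  · have : {u | (fatG k p q).Adj v u ∧ u.1 = i} =
        (fun t : Fin (p+1) => (i, t, v.2.2)) '' {t | t ≠ v.2.1} := by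
      ext ⟨a, t, s⟩
      simp only [fatG, Set.mem_ofPred_eq, Set.mem_image, Prod.mk.injEq]
      constructor
      · rintro ⟨⟨h1, h2, h3⟩ | ⟨h1, h2, h3⟩, h4⟩
        · exact absurd (h1.trans h4) hi
        · exact ⟨t, h2.symm, h4.symm, rfl, h3⟩
      · rintro ⟨t', h1, h2, rfl, h3⟩
        exact ⟨Or.inr ⟨fun h => hi (h.trans h2.symm), h1.symm, h3⟩, h2.symm⟩
    rw [this, Nat.card_image_of_injective]
    · exact card_ne_fin _ _
    · intro x y hxy
      simpa using hxy

lemma fat_core (k p q : ℕ) (hk : 2 ≤ k) : ∃ (m : ℕ) (G : SimpleGraph (Fin m)) (c : Fin m → Fin k),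
    Function.Surjective c ∧
    (∀ v i, Nat.card {u | G.Adj v u ∧ c u = i} = if c v = i then q else p) ∧
    q + 1 ≤ G.cliqueNum := by
  let e := (Fintype.equivFin (Fin k × Fin (p+1) × Fin (q+1))).symm
  refine ⟨_, (fatG k p q).comap e, fun u => (e u).1, ?_, ?_, ?_⟩
  · intro i
    exact ⟨e.symm (i, 0, 0), by simp⟩
  · intro v i
    rw [← fatG_card]
    exact Nat.card_congr (e.subtypeEquiv (fun a => Iff.rfl))
  · let s : Finset (Fin (Fintype.card (Fin k × Fin (p+1) × Fin (q+1)))) :=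
      Finset.univ.image (fun t : Fin (q+1) => e.symm ((⟨0, by omega⟩ : Fin k), (0 : Fin (p+1)), t))
    have hs : ((fatG k p q).comap e).IsClique (s : Set _) := by
      intro x hx y hy hxy
      simp only [s, Finset.coe_image, Finset.coe_univ, Set.image_univ, Set.mem_range] at hx hy
      obtain ⟨a, rfl⟩ := hx
      obtain ⟨b, rfl⟩ := hy
      simp only [SimpleGraph.comap_adj, Equiv.apply_symm_apply]
      exact Or.inl ⟨rfl, rfl, fun h => hxy (by simp only at h; rw [h])⟩
    have hc : s.card = q + 1 := by
      rw [Finset.card_image_of_injective]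
      · simp
      · intro x y hxy
        simpa using hxy
    exact hc.symm.le.trans hs.card_le_cliqueNum

lemma fat_deg {k p q m : ℕ} (hk : 2 ≤ k) {G : SimpleGraph (Fin m)} {c : Fin m → Fin k}
    (hc : ∀ v i, Nat.card {u | G.Adj v u ∧ c u = i} = if c v = i then q else p) (v : Fin m) :
    (G.neighborSet v).ncard = q + (k - 1) * p := by
  classical
  have h1 : (G.neighborSet v).ncard = (Finset.univ.filter (fun u => G.Adj v u)).card := by
    rw [← Set.ncard_coe_finset]
    congr 1
    ext u
    simp
  rw [h1, Finset.card_eq_sum_card_fiberwise (f := c) (t := Finset.univ) (by simp)]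
  have h2 : ∀ i, ((Finset.univ.filter (fun u => G.Adj v u)).filter (fun u => c u = i)).card
      = if c v = i then q else p := by
    intro i
    rw [← hc v i, Finset.filter_filter, Nat.card_coe_set_eq, ← Set.ncard_coe_finset]
    congr 1
    ext u
    simp
  rw [Finset.sum_congr rfl (fun i _ => h2 i), ← Finset.add_sum_erase _ _ (Finset.mem_univ (c v))]
  rw [Finset.sum_congr rfl (g := fun _ => p)]
  · simp
  · intro i hi
    rw [if_neg]
    exact (Finset.ne_of_mem_erase hi).symm

theorem stmt_14 (k : ℕ) (hk : 2 ≤ k) (α β : ℚ)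
    (hα : 0 ≤ α ∧ α < 1 / ((k : ℚ) - 1)) (hβ : β ∈ Set.Icc (0 : ℚ) 1)
    (h : β + ((k : ℚ) - 1) * α = 1) :
    ∃ (m : ℕ → ℕ) (G : (n : ℕ) → SimpleGraph (Fin (m n))),
      (∀ n : ℕ, ∃ d : ℕ, 0 < d ∧ ∀ v : Fin (m n), ((G n).neighborSet v).ncard = d) ∧
      (∀ n : ℕ, ∃ c : Fin (m n) → Fin k, IsFATColoring (G n) k (α : ℝ) (β : ℝ) c) ∧
      (∀ i j : ℕ, i ≠ j → (G i).cliqueNum ≠ (G j).cliqueNum) := by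
  have hk1 : (0 : ℚ) < (k : ℚ) - 1 := by
    have : (2 : ℚ) ≤ k := by exact_mod_cast hk
    linarith
  have hβ0 : 0 < β := by
    have := (lt_div_iff₀ hk1).1 hα.2
    linarith
  obtain ⟨a, b, D, hD, ha, hb⟩ : ∃ a b D : ℕ, 0 < D ∧ (a : ℚ) = α * D ∧ (b : ℚ) = β * D := by
    refine ⟨α.num.toNat * β.den, β.num.toNat * α.den, α.den * β.den,
      Nat.mul_pos α.den_pos β.den_pos, ?_, ?_⟩
    · have h1 : ((α.num.toNat : ℤ) : ℚ) = α.num := by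
        rw [Int.toNat_of_nonneg (Rat.num_nonneg.2 hα.1)]
      have h2 := Rat.mul_den_eq_num α
      push_cast at h1 ⊢
      rw [h1, ← h2]; ring
    · have h1 : ((β.num.toNat : ℤ) : ℚ) = β.num := by
        rw [Int.toNat_of_nonneg (Rat.num_nonneg.2 hβ.1)]
      have h2 := Rat.mul_den_eq_num β
      push_cast at h1 ⊢
      rw [h1, ← h2]; ring
  have hDq : (0 : ℚ) < D := by exact_mod_cast hD
  have hb0 : 0 < b := by
    have : (0 : ℚ) < b := by rw [hb]; positivity
    exact_mod_cast this
  have hsum : b + (k - 1) * a = D := by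
    have : ((b + (k - 1) * a : ℕ) : ℚ) = D := by
      push_cast [Nat.cast_sub (show 1 ≤ k by omega)]
      rw [ha, hb]
      linear_combination (D : ℚ) * h
    exact_mod_cast this
  have haR : (a : ℝ) = α * D := by exact_mod_cast congrArg (fun x : ℚ => (x : ℝ)) ha
  have hbR : (b : ℝ) = β * D := by exact_mod_cast congrArg (fun x : ℚ => (x : ℝ)) hb
  have key : ∀ n : ℕ, ∃ (m : ℕ) (G : SimpleGraph (Fin m)),
      (∃ d : ℕ, 0 < d ∧ ∀ v : Fin m, (G.neighborSet v).ncard = d) ∧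
      (∃ c : Fin m → Fin k, IsFATColoring G k (α : ℝ) (β : ℝ) c) ∧ n < G.cliqueNum := by
    intro n
    obtain ⟨m, G, c, hc, hcard, hcl⟩ := fat_core k (a * (n+1)) (b * (n+1)) hk
    have hdeg : ∀ v, (G.neighborSet v).ncard = D * (n+1) := by
      intro v
      rw [fat_deg hk hcard v, ← hsum]; ring
    refine ⟨m, G, ⟨D * (n+1), by positivity, hdeg⟩, ⟨c, hc, ?_⟩, ?_⟩
    · intro v i
      rw [hcard, hdeg]
      split_ifs
      · push_cast; rw [hbR]; ring
      · push_cast; rw [haR]; ring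
    · nlinarith
  choose m G h1 h2 h3 using key
  let f : ℕ → ℕ := fun n => Nat.rec 0 (fun _ x => (G x).cliqueNum) n
  have hf : StrictMono (fun n => (G (f n)).cliqueNum) :=
    strictMono_nat_of_lt_succ (fun n => h3 (f (n+1)))
  exact ⟨fun n => m (f n), fun n => G (f n), fun n => h1 _, fun n => h2 _,
    fun i j hij he => hij (hf.injective he)⟩
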